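/- For every g ∈ D and every polynomial f with g + f ∈ ⟨𝓕⟩, one has g ≼_w f, where ≼_w is the weighted monomial order determined by w, extended to polynomials as described. -/

import Mathlib

open MvPolynomial

/-- Monomials in the variables `σ`, represented by their exponent vectors. -/
abbrev Mon (σ : Type*) := σ →₀ ℕ

/-- A monomial order: a total order on monomials such that `1 ≼ t` for every monomial `t`
and `t ≼ u → t·v ≼ u·v` (written additively on exponent vectors). -/
structure MonOrd (σ : Type*) where
  le : Mon σ → Mon σ → Prop
  le_refl : ∀ t, le t t
  le_trans : ∀ t u v, le t u → le u v → le t v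
  le_antisymm : ∀ t u, le t u → le u t → t = u
  le_total : ∀ t u, le t u ∨ le u t
  zero_le : ∀ t, le 0 t
  add_le_add : ∀ t u v, le t u → le (t + v) (u + v)

/-- Strict version of a monomial order. -/
def MonOrd.lt {σ : Type*} (μ : MonOrd σ) (t u : Mon σ) : Prop := μ.le t u ∧ t ≠ u

/-- The extension of a monomial order (given by the relation `r` on monomials) to polynomials:
`g ≼ f` iff `g = f` or the greatest monomial on which `f` and `g` differ occurs in `f`.
(This is the closed form of the recursive definition: `g ≼ f` iff `g = f`, or
`HT g ≺ HT f`, or `HT g = HT f` and `g - HT g ≼ f - HT f`, with `0` the least polynomial.) -/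
def polyLe {σ : Type*} (r : Mon σ → Mon σ → Prop) (g f : MvPolynomial σ (ZMod 2)) : Prop :=
  g = f ∨ ∃ t, t ∈ f.support ∧ t ∉ g.support ∧
    ∀ u : Mon σ, ((u ∈ f.support ∧ u ∉ g.support) ∨ (u ∈ g.support ∧ u ∉ f.support)) → r u t

/-- Strict extension of a monomial order to polynomials. -/
def polyLt {σ : Type*} (r : Mon σ → Mon σ → Prop) (g f : MvPolynomial σ (ZMod 2)) : Prop :=
  polyLe r g f ∧ g ≠ f

/-- `S_F`: the set of non-residual polynomials with respect to `F` and the monomial order `r`,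
i.e. those `f` admitting a `g` with `f + g ∈ ⟨F⟩` and `g ≺ f`. -/
def SF {σ : Type*} (r : Mon σ → Mon σ → Prop) (F : Set (MvPolynomial σ (ZMod 2))) :
    Set (MvPolynomial σ (ZMod 2)) :=
  {f | ∃ g, f + g ∈ Ideal.span F ∧ polyLt r g f}

/-- `t` is the head monomial (`r`-greatest monomial) of the polynomial `f`. -/
def IsHT {σ : Type*} (r : Mon σ → Mon σ → Prop) (f : MvPolynomial σ (ZMod 2)) (t : Mon σ) :
    Prop :=
  t ∈ f.support ∧ ∀ u ∈ f.support, r u t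

/-- `HT(S)`: the set of head monomials (as polynomials) of the nonzero elements of `S`. -/
def HTset {σ : Type*} (r : Mon σ → Mon σ → Prop) (S : Set (MvPolynomial σ (ZMod 2))) :
    Set (MvPolynomial σ (ZMod 2)) :=
  {p | ∃ f ∈ S, f ≠ 0 ∧ ∃ t, IsHT r f t ∧ p = monomial t 1}

/-- The divisibility (componentwise) order `◁` on monomials. -/
def triMon {σ : Type*} (t u : Mon σ) : Prop := ∀ x, t x ≤ u x

/-- The order `◁` on polynomials: `p ◁ q` iff there is an injective map `φ` from the
monomials of `p` to the monomials of `q` with `t ◁ φ t` for each monomial `t` of `p`. -/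
def triPoly {σ : Type*} (p q : MvPolynomial σ (ZMod 2)) : Prop :=
  ∃ φ : Mon σ → Mon σ, Set.InjOn φ ↑p.support ∧ ∀ t ∈ p.support, φ t ∈ q.support ∧ triMon t (φ t)

/-- Upward closure with respect to `◁`. -/
def upClo {σ : Type*} (A : Set (MvPolynomial σ (ZMod 2))) : Set (MvPolynomial σ (ZMod 2)) :=
  {q | ∃ p ∈ A, triPoly p q}

/-- `Min_◁(A)`: the `◁`-minimal elements of `A`. -/
def minTri {σ : Type*} (A : Set (MvPolynomial σ (ZMod 2))) : Set (MvPolynomial σ (ZMod 2)) :=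
  {p | p ∈ A ∧ ∀ q ∈ A, triPoly q p → q = p}

/-- `G` is a Gröbner basis of the ideal `I` with respect to the monomial order `r`. -/
def IsGB {σ : Type*} (r : Mon σ → Mon σ → Prop) (G : Finset (MvPolynomial σ (ZMod 2)))
    (I : Ideal (MvPolynomial σ (ZMod 2))) : Prop :=
  (↑G : Set (MvPolynomial σ (ZMod 2))) ⊆ ↑I ∧
    Ideal.span (↑G : Set (MvPolynomial σ (ZMod 2))) = I ∧
    Ideal.span (HTset r (↑I : Set (MvPolynomial σ (ZMod 2)))) = Ideal.span (HTset r ↑G)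

/-- `G` is a reduced Gröbner basis of `I` with respect to `r`. -/
def IsReducedGB {σ : Type*} (r : Mon σ → Mon σ → Prop) (G : Finset (MvPolynomial σ (ZMod 2)))
    (I : Ideal (MvPolynomial σ (ZMod 2))) : Prop :=
  IsGB r G I ∧ ∀ f ∈ G, ¬ ∀ t ∈ f.support,
    (monomial t 1 : MvPolynomial σ (ZMod 2)) ∈
      Ideal.span (HTset r ((↑G : Set (MvPolynomial σ (ZMod 2))) \ {f}))

/-- The variable set `X`: the special variables `s, ℓ, c, c̄, b, b̄` together with, for each
`0 ≤ i ≤ n`, the variables `s_i, f_i, q_{ji}, c_{ji}, b_{ji}` (`1 ≤ j ≤ 4`, encoded by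
`j : Fin 4`) and their barred copies (`bar = true`). -/
inductive MVar (n : ℕ) : Type where
  | vs | vl | vc | vcb | vb | vbb
  | vS (bar : Bool) (i : Fin (n+1))
  | vF (bar : Bool) (i : Fin (n+1))
  | vQ (bar : Bool) (j : Fin 4) (i : Fin (n+1))
  | vC (bar : Bool) (j : Fin 4) (i : Fin (n+1))
  | vB (bar : Bool) (j : Fin 4) (i : Fin (n+1))
deriving DecidableEq

open MVar

abbrev MPoly (n : ℕ) := MvPolynomial (MVar n) (ZMod 2)

/-- `e(n) = 2^(2^n)`. -/
def en (n : ℕ) : ℕ := 2 ^ 2 ^ n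

/-- The set `P_0` (barred copy if `bar = true`). -/
def P0 (n : ℕ) (bar : Bool) : Set (MPoly n) :=
  {p | ∃ j : Fin 4, p =
    X (vB bar j 0) ^ 2 * X (vC bar j 0) * X (vF bar 0) + X (vC bar j 0) * X (vS bar 0)}

/-- The set `P_m` for `m = i+1`, `i : Fin n` (barred copy if `bar = true`).
Here `i.succ` plays the role of `m` and `i.castSucc` the role of `m-1`; the indices
`1,2,3,4` of the paper are encoded as `0,1,2,3 : Fin 4`. -/
def Pm (n : ℕ) (bar : Bool) (i : Fin n) : Set (MPoly n) :=
  ({ X (vQ bar 0 i.succ) * X (vC bar 0 i.castSucc) * X (vS bar i.castSucc) + X (vS bar i.succ),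
    X (vQ bar 1 i.succ) * X (vC bar 1 i.castSucc) * X (vS bar i.castSucc)
      + X (vQ bar 0 i.succ) * X (vB bar 0 i.castSucc) * X (vC bar 0 i.castSucc)
        * X (vF bar i.castSucc),
    X (vQ bar 2 i.succ) * X (vC bar 2 i.castSucc) * X (vF bar i.castSucc)
      + X (vQ bar 1 i.succ) * X (vC bar 1 i.castSucc) * X (vF bar i.castSucc),
    X (vQ bar 2 i.succ) * X (vB bar 0 i.castSucc) * X (vC bar 2 i.castSucc)
        * X (vS bar i.castSucc)
      + X (vQ bar 1 i.succ) * X (vB bar 3 i.castSucc) * X (vC bar 1 i.castSucc)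
        * X (vS bar i.castSucc),
    X (vQ bar 3 i.succ) * X (vB bar 3 i.castSucc) * X (vC bar 3 i.castSucc)
        * X (vF bar i.castSucc)
      + X (vQ bar 2 i.succ) * X (vC bar 2 i.castSucc) * X (vS bar i.castSucc),
    X (vQ bar 3 i.succ) * X (vC bar 3 i.castSucc) * X (vS bar i.castSucc)
      + X (vF bar i.succ) } : Set (MPoly n))
  ∪ {p | ∃ j : Fin 4, p =
      X (vQ bar 1 i.succ) * X (vB bar 2 i.castSucc) * X (vB bar j i.succ) * X (vC bar j i.succ)
          * X (vF bar i.castSucc)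
        + X (vQ bar 1 i.succ) * X (vB bar 1 i.castSucc) * X (vC bar j i.succ)
          * X (vF bar i.castSucc)}

/-- The set `P = P_0 ∪ P_1 ∪ ⋯ ∪ P_n`; for `bar = true` this is the barred copy `P̄`
(the image of `P` under the substitution replacing each variable by its barred version). -/
def PP (n : ℕ) (bar : Bool) : Set (MPoly n) := P0 n bar ∪ ⋃ i : Fin n, Pm n bar i

/-- The set `G` of seven extra binomials. -/
def GG (n : ℕ) : Set (MPoly n) :=
  { X (vB false 3 (Fin.last n)) * X vl * X vb + X vl * X vc,
    X (vB false 3 (Fin.last n)) * X vl * X vbb + X vl * X vcb,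
    X (vC false 3 (Fin.last n)) * X (vF false (Fin.last n)) + X vl,
    X (vC true 3 (Fin.last n)) * X (vF true (Fin.last n))
      + X (vC false 3 (Fin.last n)) * X (vS false (Fin.last n)),
    X (vB true 3 (Fin.last n)) * X (vC false 3 (Fin.last n)) * X (vS false (Fin.last n))
      + X (vC false 3 (Fin.last n)) * X (vS false (Fin.last n)) * X vb,
    X (vB true 3 (Fin.last n)) * X (vC false 3 (Fin.last n)) * X (vS false (Fin.last n))
      + X (vC false 3 (Fin.last n)) * X (vS false (Fin.last n)) * X vbb,
    X (vC true 3 (Fin.last n)) * X (vS true (Fin.last n)) + X vs }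

/-- The set `𝓕 = P ∪ P̄ ∪ G`. -/
def FF (n : ℕ) : Set (MPoly n) := PP n false ∪ PP n true ∪ GG n

/-- The set `C = {ℓ c̄^{m1} c^{m2} : m1 + m2 = e(n)}` of monomials. -/
def Cmon (n : ℕ) : Set (Mon (MVar n)) :=
  {α | ∃ m1 m2 : ℕ, m1 + m2 = en n ∧
    α = Finsupp.single vl 1 + Finsupp.single vcb m1 + Finsupp.single vc m2}

/-- The set `D = {ℓ^j c̄^{m1} c^{m2} : j ∈ {0,1}, j + m1 + m2 ≤ e(n)}` of monomials. -/
def Dmon (n : ℕ) : Set (Mon (MVar n)) :=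
  {α | ∃ j m1 m2 : ℕ, j ≤ 1 ∧ j + m1 + m2 ≤ en n ∧
    α = Finsupp.single vl j + Finsupp.single vcb m1 + Finsupp.single vc m2}

/-- An injective rank function on the variables realizing the variable ordering
(from least to greatest): `s, c, c̄, ℓ, b, b̄`; then `s_0,…,s_n`; `f_0,…,f_n`;
`c_{10},…,c_{1n}; …; c_{40},…,c_{4n}`; `b_{10},…,b_{4n}`; `q_{10},…,q_{4n}`;
then the barred variables in the same pattern. -/
def vrank (n : ℕ) : MVar n → ℕ
  | .vs => 0
  | .vc => 1
  | .vcb => 2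
  | .vl => 3
  | .vb => 4
  | .vbb => 5
  | .vS bar i => 6 + (cond bar (14 * (n+1)) 0) + (i : ℕ)
  | .vF bar i => 6 + (cond bar (14 * (n+1)) 0) + (n+1) + (i : ℕ)
  | .vC bar j i => 6 + (cond bar (14 * (n+1)) 0) + 2*(n+1) + (j : ℕ)*(n+1) + (i : ℕ)
  | .vB bar j i => 6 + (cond bar (14 * (n+1)) 0) + 6*(n+1) + (j : ℕ)*(n+1) + (i : ℕ)
  | .vQ bar j i => 6 + (cond bar (14 * (n+1)) 0) + 10*(n+1) + (j : ℕ)*(n+1) + (i : ℕ)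

/-- The lexicographic monomial order on `X`: `t ≼_lex u` iff `t = u` or the exponents differ
somewhere and at the greatest variable (w.r.t. `vrank`) where they differ, the exponent of
`t` is smaller. -/
def lexLe (n : ℕ) (t u : Mon (MVar n)) : Prop :=
  t = u ∨ ∃ x : MVar n, t x < u x ∧ ∀ y : MVar n, vrank n x < vrank n y → t y = u y

/-- The total degree of a monomial. -/
def mdeg {σ : Type*} (t : Mon σ) : ℕ := t.sum fun _ k => k

/-- The degree lexicographic monomial order. -/
def degLexLe (n : ℕ) (t u : Mon (MVar n)) : Prop :=
  mdeg t < mdeg u ∨ (mdeg t = mdeg u ∧ lexLe n t u)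

/-- Weighted degree of a monomial with respect to a weight map `w`. -/
noncomputable def wdeg {n : ℕ} (w : MVar n → ℝ) (t : Mon (MVar n)) : ℝ :=
  t.sum fun x k => (k : ℝ) * w x

/-- The weighted monomial order determined by the weight map `w`. -/
def wLe {n : ℕ} (w : MVar n → ℝ) (t u : Mon (MVar n)) : Prop := t = u ∨ wdeg w t < wdeg w u



/-- one level of variables -/
@[ext] structure Lv where
  s : ℕ
  f : ℕ
  q : Fin 4 → ℕ
  c : Fin 4 → ℕ
  b : Fin 4 → ℕ

namespace Lv

def plus (x y : Lv) : Lv := ⟨x.s + y.s, x.f + y.f, fun j => x.q j + y.q j, fun j => x.c j + y.c j,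
  fun j => x.b j + y.b j⟩

def Zero (x : Lv) : Prop := x.s = 0 ∧ x.f = 0 ∧ (∀ j, x.q j = 0) ∧ (∀ j, x.c j = 0) ∧ ∀ j, x.b j = 0

end Lv

def isD (g : Fin 4 → ℕ) (a : Fin 4) : Prop := ∀ j, g j = if j = a then 1 else 0

def Cons (E : ℕ) (a : Fin 4) (γ : Fin 4 → ℕ) (v : ℕ) : Prop :=
  γ 0 + γ 3 + (if a = 1 ∨ a = 2 then 1 else 0) = E ∧
  γ 1 + γ 2 = (if a = 1 ∨ a = 2 then E else 0) ∧ v = E * γ 0 + γ 1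

def Tk (M : ℕ → Lv) (m v : ℕ) : Prop :=
  (M m).s + (M m).f = 1 ∧ v = en m * (M m).s ∧ (∀ j, (M m).q j = 0) ∧ ∀ k < m, (M k).Zero

def QQ (M : ℕ → Lv) : ℕ → ℕ → Prop
  | 0, v => Tk M 0 v
  | m + 1, v => Tk M (m + 1) v ∨ ((M (m+1)).s = 0 ∧ (M (m+1)).f = 0 ∧
      ∃ a v', QQ M m v' ∧ isD (M (m+1)).q a ∧ isD (M m).c a ∧
        Cons (en m) a (fun j => (M m).b j + if j = a then v' else 0) v)

def TT (M : ℕ → Lv) (m : ℕ) (i : Fin 4) (Γ : Fin 4 → ℕ) : Prop :=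
  ∃ v, QQ M m v ∧ isD (M m).c i ∧ ∀ j, Γ j = (M m).b j + if j = i then v else 0

theorem QQ_succ (M : ℕ → Lv) (m v : ℕ) : QQ M (m+1) v ↔
    Tk M (m + 1) v ∨ ((M (m+1)).s = 0 ∧ (M (m+1)).f = 0 ∧
      ∃ a γ, TT M m a γ ∧ isD (M (m+1)).q a ∧ Cons (en m) a γ v) := by
  constructor
  · rintro (h | ⟨h1, h2, a, v', h3, h4, h5, h6⟩)
    · exact Or.inl h
    · exact Or.inr ⟨h1, h2, a, _, ⟨v', h3, h5, fun j => rfl⟩, h4, h6⟩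
  · rintro (h | ⟨h1, h2, a, γ, ⟨v', h3, h5, h7⟩, h4, h6⟩)
    · exact Or.inl h
    · refine Or.inr ⟨h1, h2, a, v', h3, h4, h5, ?_⟩
      rwa [← funext h7]

/-- token at level m -/
theorem QQ_tok (M : ℕ → Lv) (m v : ℕ) (h : 1 ≤ (M m).s + (M m).f) : QQ M m v ↔ Tk M m v := by
  cases m with
  | zero => rfl
  | succ m =>
    rw [QQ]
    constructor
    · rintro (h1 | ⟨h1, h2, _⟩)
      · exact h1
      · omega
    · exact Or.inl

/-- lifting -/
theorem TT_lift (M M' : ℕ → Lv) (p : ℕ) (h : ∀ m, p < m → M m = M' m)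
    (hz : ¬ (M p).Zero) (hT : ∀ i Γ, TT M p i Γ → TT M' p i Γ) (d : ℕ) :
    ∀ i Γ, TT M (p+d) i Γ → TT M' (p+d) i Γ := by
  induction d with
  | zero => exact hT
  | succ d ih =>
    rintro i Γ ⟨v, hv, hc, hb⟩
    rw [← add_assoc, QQ_succ] at hv
    have e := h (p+d+1) (by omega)
    rcases hv with h1 | ⟨h1, h2, a, γ, h3, h4, h5⟩
    · exact absurd (h1.2.2.2 p (by omega)) hz
    · refine ⟨v, ?_, ?_, ?_⟩
      · rw [← add_assoc, QQ_succ]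
        exact Or.inr ⟨e ▸ h1, e ▸ h2, a, γ, ih _ _ h3, e ▸ h4, h5⟩
      · rw [← add_assoc] at *; exact e ▸ hc
      · rw [← add_assoc] at *; exact e ▸ hb

def Loc (E : ℕ) (x y : Lv) (v : ℕ) : Prop :=
  (y.s + y.f = 1 ∧ v = E * E * y.s ∧ (∀ j, y.q j = 0) ∧ x.Zero) ∨
  (y.s = 0 ∧ y.f = 0 ∧ (∀ j, x.q j = 0) ∧ x.s + x.f = 1 ∧ ∃ a, isD y.q a ∧ isD x.c a ∧
    Cons E a (fun j => x.b j + if j = a then E * x.s else 0) v)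

theorem en_succ (p : ℕ) : en (p+1) = en p * en p := by
  unfold en; rw [← pow_add, pow_succ]; ring_nf

theorem QQ_loc (M : ℕ → Lv) (p v : ℕ) (h : 1 ≤ (M p).s + (M p).f + ((M (p+1)).s + (M (p+1)).f)) :
    QQ M (p+1) v ↔ (∀ k < p, (M k).Zero) ∧ Loc (en p) (M p) (M (p+1)) v := by
  rw [QQ, Loc, ← en_succ]
  constructor
  · rintro (⟨h1, h2, h3, h4⟩ | ⟨h1, h2, a, v', h3, h4, h5, h6⟩)
    · exact ⟨fun k hk => h4 k (by omega), Or.inl ⟨h1, h2, h3, h4 p (by omega)⟩⟩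
    · rw [QQ_tok _ _ _ (by omega)] at h3
      obtain ⟨k1, k2, k3, k4⟩ := h3
      subst k2
      exact ⟨k4, Or.inr ⟨h1, h2, k3, k1, a, h4, h5, h6⟩⟩
  · rintro ⟨hz, (⟨h1, h2, h3, h4⟩ | ⟨h1, h2, h3, h4, a, h5, h6, h7⟩)⟩
    · refine Or.inl ⟨h1, h2, h3, fun k hk => ?_⟩
      rcases Nat.lt_succ_iff_lt_or_eq.1 hk with h | rfl
      · exact hz k h
      · exact h4
    · refine Or.inr ⟨h1, h2, a, _, ?_, h5, h6, h7⟩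
      rw [QQ_tok _ _ _ (by omega)]
      exact ⟨h4, rfl, h3, hz⟩

/-- local rule equivalence -/
def LocEq (U1 U2 V1 V2 : Lv) : Prop := ∀ E, ∀ x y : Lv, ∀ (i : Fin 4) (Γ : Fin 4 → ℕ),
  (∃ v, Loc E (x.plus U1) (y.plus U2) v ∧ isD (y.plus U2).c i ∧
    ∀ j, Γ j = (y.plus U2).b j + if j = i then v else 0) ↔
  (∃ v, Loc E (x.plus V1) (y.plus V2) v ∧ isD (y.plus V2).c i ∧
    ∀ j, Γ j = (y.plus V2).b j + if j = i then v else 0)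

theorem LocEq_of (U1 U2 V1 V2 : Lv) (hc : U2.c = V2.c) (hb : U2.b = V2.b)
    (h : ∀ (E : ℕ) (x y : Lv) (v : ℕ), Loc E (x.plus U1) (y.plus U2) v ↔ Loc E (x.plus V1) (y.plus V2) v) :
    LocEq U1 U2 V1 V2 := by
  intro E x y i Γ
  have e1 : (y.plus U2).c = (y.plus V2).c := by simp only [Lv.plus, hc]
  have e2 : (y.plus U2).b = (y.plus V2).b := by simp only [Lv.plus, hb]
  simp only [h, e1, e2]

theorem TT_rule (M M' : ℕ → Lv) (p n : ℕ) (hn : p + 1 ≤ n) (x y U1 U2 V1 V2 : Lv)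
    (h : ∀ m, m ≠ p → m ≠ p+1 → M m = M' m)
    (e1 : M p = x.plus U1) (e2 : M (p+1) = y.plus U2)
    (e3 : M' p = x.plus V1) (e4 : M' (p+1) = y.plus V2)
    (hU : 1 ≤ U1.s + U1.f + (U2.s + U2.f)) (hV : 1 ≤ V1.s + V1.f + (V2.s + V2.f))
    (hU' : 1 ≤ U2.q 0 + U2.q 1 + U2.q 2 + U2.q 3 + (U2.s + U2.f)) 
    (hl : LocEq U1 U2 V1 V2) (i : Fin 4) (Γ : Fin 4 → ℕ) : TT M n i Γ → TT M' n i Γ := by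
  obtain ⟨d, rfl⟩ := Nat.exists_eq_add_of_le hn
  apply TT_lift M M' (p+1)
  · intro m hm; exact h m (by omega) (by omega)
  · rintro ⟨z1, z2, z3, -⟩
    have := z3 0
    have := z3 1
    have := z3 2
    have := z3 3
    simp only [e2, Lv.plus] at *
    omega
  · intro i Γ
    unfold TT
    rintro ⟨v, h1, h2, h3⟩
    rw [QQ_loc _ _ _ (by simp only [e1, e2, Lv.plus]; omega), e1, e2] at h1
    rw [e2] at h2 h3
    obtain ⟨v', k1, k2, k3⟩ := (hl _ _ _ _ _).1 ⟨v, h1.2, h2, h3⟩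
    refine ⟨v', ?_, ?_, ?_⟩
    · rw [QQ_loc _ _ _ (by simp only [e3, e4, Lv.plus]; omega), e3, e4]
      exact ⟨fun k hk => h k (by omega) (by omega) ▸ h1.1 k hk, k1⟩
    · rw [e4]; exact k2
    · rw [e4]; exact k3

theorem all4 {P : Fin 4 → Prop} : (∀ j, P j) ↔ P 0 ∧ P 1 ∧ P 2 ∧ P 3 := by
  simp [Fin.forall_fin_succ]
theorem ex4 {P : Fin 4 → Prop} : (∃ j, P j) ↔ P 0 ∨ P 1 ∨ P 2 ∨ P 3 := by
  simp [Fin.exists_fin_succ]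


theorem loc1 : LocEq ⟨1, 0, ![0,0,0,0], ![1,0,0,0], ![0,0,0,0]⟩
    ⟨0, 0, ![1,0,0,0], ![0,0,0,0], ![0,0,0,0]⟩
    ⟨0, 0, ![0,0,0,0], ![0,0,0,0], ![0,0,0,0]⟩
    ⟨1, 0, ![0,0,0,0], ![0,0,0,0], ![0,0,0,0]⟩ := by
  refine LocEq_of _ _ _ _ ?_ ?_ ?_
  · rfl
  · rfl
  rintro E ⟨xs, xf, xq, xc, xb⟩ ⟨ys, yf, yq, yc, yb⟩ v
  simp [Loc, isD, Cons, Lv.Zero, Lv.plus, all4, ex4]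
  intros
  constructor
  · intro h; grind
  · intro h; grind

theorem loc2 : LocEq ⟨1, 0, ![0,0,0,0], ![0,1,0,0], ![0,0,0,0]⟩
    ⟨0, 0, ![0,1,0,0], ![0,0,0,0], ![0,0,0,0]⟩
    ⟨0, 1, ![0,0,0,0], ![1,0,0,0], ![1,0,0,0]⟩
    ⟨0, 0, ![1,0,0,0], ![0,0,0,0], ![0,0,0,0]⟩ := by
  refine LocEq_of _ _ _ _ ?_ ?_ ?_
  · rfl
  · rfl
  rintro E ⟨xs, xf, xq, xc, xb⟩ ⟨ys, yf, yq, yc, yb⟩ v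
  simp [Loc, isD, Cons, Lv.Zero, Lv.plus, all4, ex4]
  intros
  constructor
  · intro h; grind
  · intro h; grind

theorem loc3 : LocEq ⟨0, 1, ![0,0,0,0], ![0,0,1,0], ![0,0,0,0]⟩
    ⟨0, 0, ![0,0,1,0], ![0,0,0,0], ![0,0,0,0]⟩
    ⟨0, 1, ![0,0,0,0], ![0,1,0,0], ![0,0,0,0]⟩
    ⟨0, 0, ![0,1,0,0], ![0,0,0,0], ![0,0,0,0]⟩ := by
  refine LocEq_of _ _ _ _ ?_ ?_ ?_
  · rfl
  · rfl
  rintro E ⟨xs, xf, xq, xc, xb⟩ ⟨ys, yf, yq, yc, yb⟩ v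
  simp [Loc, isD, Cons, Lv.Zero, Lv.plus, all4, ex4]
  intros
  constructor
  · intro h; grind
  · intro h; grind

theorem loc4 : LocEq ⟨1, 0, ![0,0,0,0], ![0,0,1,0], ![1,0,0,0]⟩
    ⟨0, 0, ![0,0,1,0], ![0,0,0,0], ![0,0,0,0]⟩
    ⟨1, 0, ![0,0,0,0], ![0,1,0,0], ![0,0,0,1]⟩
    ⟨0, 0, ![0,1,0,0], ![0,0,0,0], ![0,0,0,0]⟩ := by
  refine LocEq_of _ _ _ _ ?_ ?_ ?_
  · rfl
  · rfl
  rintro E ⟨xs, xf, xq, xc, xb⟩ ⟨ys, yf, yq, yc, yb⟩ v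
  simp [Loc, isD, Cons, Lv.Zero, Lv.plus, all4, ex4]
  intros
  constructor
  · intro h; grind
  · intro h; grind

theorem loc5 : LocEq ⟨0, 1, ![0,0,0,0], ![0,0,0,1], ![0,0,0,1]⟩
    ⟨0, 0, ![0,0,0,1], ![0,0,0,0], ![0,0,0,0]⟩
    ⟨1, 0, ![0,0,0,0], ![0,0,1,0], ![0,0,0,0]⟩
    ⟨0, 0, ![0,0,1,0], ![0,0,0,0], ![0,0,0,0]⟩ := by
  refine LocEq_of _ _ _ _ ?_ ?_ ?_
  · rfl
  · rfl
  rintro E ⟨xs, xf, xq, xc, xb⟩ ⟨ys, yf, yq, yc, yb⟩ v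
  simp [Loc, isD, Cons, Lv.Zero, Lv.plus, all4, ex4]
  intros
  constructor
  · intro h; grind
  · intro h; grind

theorem loc6 : LocEq ⟨1, 0, ![0,0,0,0], ![0,0,0,1], ![0,0,0,0]⟩
    ⟨0, 0, ![0,0,0,1], ![0,0,0,0], ![0,0,0,0]⟩
    ⟨0, 0, ![0,0,0,0], ![0,0,0,0], ![0,0,0,0]⟩
    ⟨0, 1, ![0,0,0,0], ![0,0,0,0], ![0,0,0,0]⟩ := by
  refine LocEq_of _ _ _ _ ?_ ?_ ?_
  · rfl
  · rfl
  rintro E ⟨xs, xf, xq, xc, xb⟩ ⟨ys, yf, yq, yc, yb⟩ v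
  simp [Loc, isD, Cons, Lv.Zero, Lv.plus, all4, ex4]
  intros
  constructor
  · intro h; grind
  · intro h; grind

theorem loc7 (k : Fin 4) : LocEq ⟨0, 1, ![0,0,0,0], ![0,0,0,0], ![0,0,1,0]⟩
    ⟨0, 0, ![0,1,0,0], fun j => if j = k then 1 else 0, fun j => if j = k then 1 else 0⟩
    ⟨0, 1, ![0,0,0,0], ![0,0,0,0], ![0,1,0,0]⟩
    ⟨0, 0, ![0,1,0,0], fun j => if j = k then 1 else 0, fun _ => 0⟩ := by
  rintro E ⟨xs, xf, xq, xc, xb⟩ ⟨ys, yf, yq, yc, yb⟩ i Γ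
  have hik : ∀ g : Fin 4 → ℕ, isD (fun j => g j + if j = k then 1 else 0) i → i = k := by
    intro g h
    have := h k
    by_contra h'
    simp [Ne.symm h'] at this
  constructor
  · rintro ⟨v, h1, h2, h3⟩
    obtain rfl := hik _ h2
    refine ⟨v + 1, ?_, h2, ?_⟩
    · simp [Loc, isD, Cons, Lv.Zero, Lv.plus, all4, ex4] at h1 ⊢
      grind
    · intro j; simp [Lv.plus, h3]; split_ifs <;> omega
  · rintro ⟨v, h1, h2, h3⟩
    obtain rfl := hik _ h2
    refine ⟨v - 1, ?_, h2, ?_⟩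
    · simp [Loc, isD, Cons, Lv.Zero, Lv.plus, all4, ex4] at h1 ⊢
      grind
    · have : 1 ≤ v := by
        simp [Loc, isD, Cons, Lv.Zero, Lv.plus, all4, ex4] at h1
        grind
      intro j; simp [Lv.plus, h3]; split_ifs <;> omega
set_option linter.all false
open MvPolynomial MVar

/-- slice of the unbarred variables at a level -/
def lv {n : ℕ} (t : Mon (MVar n)) (k : Fin (n+1)) : Lv :=
  ⟨t (vS false k), t (vF false k), fun j => t (vQ false j k), fun j => t (vC false j k),
    fun j => t (vB false j k)⟩

def lvl {n : ℕ} (t : Mon (MVar n)) (m : ℕ) : Lv :=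
  if h : m < n + 1 then lv t ⟨m, h⟩ else ⟨0, 0, fun _ => 0, fun _ => 0, fun _ => 0⟩

theorem lv_add {n : ℕ} (t u : Mon (MVar n)) (k : Fin (n+1)) :
    lv (t + u) k = (lv t k).plus (lv u k) := rfl

theorem lvl_fin {n : ℕ} (t : Mon (MVar n)) (k : Fin (n+1)) : lvl t k = lv t k := by
  unfold lvl; rw [dif_pos k.2]

theorem LocEq.symm {U1 U2 V1 V2 : Lv} (h : LocEq U1 U2 V1 V2) : LocEq V1 V2 U1 U2 :=
  fun E x y i Γ => (h E x y i Γ).symm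

/-- the set of monomials reachable from `ℓ c̄^m1 c^m2` -/
def bars {n : ℕ} : MVar n → Bool
  | vS b _ => b
  | vF b _ => b
  | vQ b _ _ => b
  | vC b _ _ => b
  | vB b _ _ => b
  | _ => false

def fl {n : ℕ} : MVar n → Bool
  | vS b _ => !b
  | vF b _ => !b
  | vQ b _ _ => !b
  | vC b _ _ => !b
  | vB b _ _ => !b
  | _ => false

def inA (n m1 m2 : ℕ) (M : Mon (MVar n)) : Prop :=
  M vl = 1 ∧ (∀ m < n, (lvl M m).Zero) ∧
    ((lvl M n).s = 0 ∧ (lvl M n).f = 0 ∧ (∀ j, (lvl M n).q j = 0) ∧ (∀ j, (lvl M n).c j = 0) ∧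
      ∀ j, j ≠ 3 → (lvl M n).b j = 0) ∧
    (lvl M n).b 3 + M vc + M vcb = m1 + m2

def inB (n m1 m2 : ℕ) (M : Mon (MVar n)) : Prop :=
  M vl = 0 ∧ ∃ Γ, TT (lvl M) n 3 Γ ∧ (∀ j, j ≠ 3 → Γ j = 0) ∧ Γ 3 + M vc + M vcb = m1 + m2

def inS (n m1 m2 : ℕ) (M : Mon (MVar n)) : Prop :=
  (∀ x, bars x = true → M x = 0) ∧ M vs = 0 ∧ M vc + M vb = m2 ∧ M vcb + M vbb = m1 ∧
    (inA n m1 m2 M ∨ inB n m1 m2 M)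

theorem not_inS_bar {n m1 m2 : ℕ} {u : Mon (MVar n)} (t : Mon (MVar n)) (x : MVar n)
    (hx : bars x = true) (hu : 1 ≤ u x) :
    ¬ inS n m1 m2 (t + u) := by
  intro h
  have := h.1 x hx
  simp at this
  omega

theorem not_inA_tok {n m1 m2 : ℕ} {u : Mon (MVar n)} (t : Mon (MVar n)) (k : Fin (n+1))
    (hu : 1 ≤ u (vS false k) + u (vF false k)) :
    ¬ inA n m1 m2 (t + u) := by
  rintro ⟨-, h1, h2, -⟩
  have e := lvl_fin (t + u) k
  have e1 : (lvl (t+u) k).s = t (vS false k) + u (vS false k) := by rw [e]; rfl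
  have e2 : (lvl (t+u) k).f = t (vF false k) + u (vF false k) := by rw [e]; rfl
  rcases Nat.lt_succ_iff_lt_or_eq.1 k.2 with h | h
  · have := h1 _ h
    have a1 := this.1
    have a2 := this.2.1
    omega
  · have a1 := h2.1
    have a2 := h2.2.1
    rw [congrArg (lvl (t+u)) h] at e1 e2
    omega

theorem cl_P {n m1 m2 : ℕ} {bar : Bool} {u v : Mon (MVar n)} (k l : Fin (n+1))
    (hu : 1 ≤ u (vS bar k) + u (vF bar k)) (hv : 1 ≤ v (vS bar l) + v (vF bar l))
    (hfl : bar = false → ∀ x, fl x = false → u x = 0 ∧ v x = 0)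
    (hT : bar = false → ∀ t i Γ, TT (lvl (t+u)) n i Γ ↔ TT (lvl (t+v)) n i Γ) (t : Mon (MVar n)) :
    inS n m1 m2 (t + u) ↔ inS n m1 m2 (t + v) := by
  cases bar with
  | true =>
    have a1 : ¬ inS n m1 m2 (t + u) := by
      by_cases h : 1 ≤ u (vS true k)
      · exact not_inS_bar t _ rfl h
      · exact not_inS_bar t (vF true k) rfl (by omega)
    have a2 : ¬ inS n m1 m2 (t + v) := by
      by_cases h : 1 ≤ v (vS true l)
      · exact not_inS_bar t _ rfl h
      · exact not_inS_bar t (vF true l) rfl (by omega)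
    tauto
  | false =>
    have hx : ∀ x, fl x = false → (t+u) x = (t+v) x := by
      intro x h; simp [hfl rfl x h]
    have hb : ∀ x : MVar n, bars x = true → fl x = false := by
      intro x; cases x <;> simp [bars, fl]
    unfold inS
    have n1 := not_inA_tok (m1 := m1) (m2 := m2) t k hu
    have n2 := not_inA_tok (m1 := m1) (m2 := m2) t l hv
    simp only [n1, n2, false_or]
    unfold inB
    rw [hx vs rfl, hx vc rfl, hx vcb rfl, hx vl rfl, hx vb rfl, hx vbb rfl]
    simp only [hT rfl]
    have : (∀ x, bars x = true → (t+u) x = 0) ↔ (∀ x, bars x = true → (t+v) x = 0) :=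
      forall₂_congr fun x h => by rw [hx x (hb x h)]
    rw [this]

theorem TT_rule_half {n : ℕ} {u v : Mon (MVar n)} (k : Fin n) {U1 U2 V1 V2 : Lv}
    (e1 : lv u k.castSucc = U1) (e2 : lv u k.succ = U2)
    (e3 : lv v k.castSucc = V1) (e4 : lv v k.succ = V2)
    (h : ∀ m, m ≠ k.castSucc → m ≠ k.succ → lv u m = lv v m)
    (hU : 1 ≤ U1.s + U1.f + (U2.s + U2.f)) (hV : 1 ≤ V1.s + V1.f + (V2.s + V2.f))
    (hU' : 1 ≤ U2.q 0 + U2.q 1 + U2.q 2 + U2.q 3 + (U2.s + U2.f)) 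
    (hl : LocEq U1 U2 V1 V2) (t : Mon (MVar n)) (i : Fin 4) (Γ : Fin 4 → ℕ) :
    TT (lvl (t+u)) n i Γ → TT (lvl (t+v)) n i Γ := by
  refine TT_rule _ _ k n k.2 (lv t k.castSucc) (lv t k.succ) U1 U2 V1 V2 ?_ ?_ ?_ ?_ ?_ hU hV hU' hl i Γ
  · intro m h1 h2
    unfold lvl
    split_ifs with hm
    · rw [lv_add, lv_add, h]
      · intro h; apply h1; simpa using congrArg Fin.val h
      · intro h; apply h2; simpa using congrArg Fin.val h
    · rfl
  · rw [← e1]; exact lvl_fin (t+u) k.castSucc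
  · rw [← e2]; exact lvl_fin (t+u) k.succ
  · rw [← e3]; exact lvl_fin (t+v) k.castSucc
  · rw [← e4]; exact lvl_fin (t+v) k.succ

theorem TT_rule_iff {n : ℕ} {u v : Mon (MVar n)} (k : Fin n) {U1 U2 V1 V2 : Lv}
    (hl : LocEq U1 U2 V1 V2)
    (hU : 1 ≤ U1.s + U1.f + (U2.s + U2.f)) (hV : 1 ≤ V1.s + V1.f + (V2.s + V2.f))
    (hU' : 1 ≤ U2.q 0 + U2.q 1 + U2.q 2 + U2.q 3 + (U2.s + U2.f)) 
    (hV' : 1 ≤ V2.q 0 + V2.q 1 + V2.q 2 + V2.q 3 + (V2.s + V2.f)) 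
    (e1 : lv u k.castSucc = U1) (e2 : lv u k.succ = U2)
    (e3 : lv v k.castSucc = V1) (e4 : lv v k.succ = V2)
    (h : ∀ m, m ≠ k.castSucc → m ≠ k.succ → lv u m = lv v m)
    (t : Mon (MVar n)) (i : Fin 4) (Γ : Fin 4 → ℕ) :
    TT (lvl (t+u)) n i Γ ↔ TT (lvl (t+v)) n i Γ :=
  ⟨TT_rule_half k e1 e2 e3 e4 h hU hV hU' hl t i Γ,
   TT_rule_half k e3 e4 e1 e2 (fun m a b => (h m a b).symm) hV hU hV' hl.symm t i Γ⟩

theorem TT0_half {M M' : ℕ → Lv} (n : ℕ) (j : Fin 4) (x : Lv) (h : ∀ m, 0 < m → M m = M' m)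
    (e1 : M 0 = x.plus ⟨0, 1, fun _ => 0, fun i => if i = j then 1 else 0, fun i => if i = j then 2 else 0⟩)
    (e2 : M' 0 = x.plus ⟨1, 0, fun _ => 0, fun i => if i = j then 1 else 0, fun _ => 0⟩)
    (i : Fin 4) (Γ : Fin 4 → ℕ) :
    (TT M n i Γ → TT M' n i Γ) ∧ (TT M' n i Γ → TT M n i Γ) := by
  have hc : ∀ g : Fin 4 → ℕ, ∀ i, isD (fun l => g l + if l = j then 1 else 0) i → i = j := by
    intro g i h
    have := h j
    by_contra h'
    simp [Ne.symm h'] at this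
  constructor
  · have := TT_lift M M' 0 h (by rw [e1]; simp [Lv.Zero, Lv.plus]) ?_ n
    · simpa using this i Γ
    rintro i Γ ⟨v, h1, h2, h3⟩
    rw [e1] at h2 h3
    obtain rfl := hc _ _ h2
    simp only [TT, QQ, Tk, e1, e2, Lv.plus, en] at *
    refine ⟨v + 2, by constructor <;> grind, h2, ?_⟩
    intro l; rw [h3 l]; split_ifs <;> omega
  · have := TT_lift M' M 0 (fun m hm => (h m hm).symm) (by rw [e2]; simp [Lv.Zero, Lv.plus]) ?_ n
    · simpa using this i Γ
    rintro i Γ ⟨v, h1, h2, h3⟩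
    rw [e2] at h2 h3
    obtain rfl := hc _ _ h2
    simp only [TT, QQ, Tk, e1, e2, Lv.plus, en] at *
    refine ⟨v - 2, by constructor <;> grind, h2, ?_⟩
    have : 2 ≤ v := by grind
    intro l; rw [h3 l]; split_ifs <;> omega

def Cl (n m1 m2 : ℕ) (p : MPoly n) : Prop :=
  ∃ u v : Mon (MVar n), p = monomial u 1 + monomial v 1 ∧
    ∀ t, inS n m1 m2 (t+u) ↔ inS n m1 m2 (t+v)

theorem cl_P0 {n m1 m2 : ℕ} (bar : Bool) (p : MPoly n) (hp : p ∈ P0 n bar) : Cl n m1 m2 p := by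
  obtain ⟨j, rfl⟩ := hp
  refine ⟨_, _, by simp only [X, monomial_mul, monomial_pow, mul_one, one_pow]; rfl, ?_⟩
  apply cl_P (bar := bar) 0 0
  · simp [Finsupp.single_apply]
  · simp [Finsupp.single_apply]
  · rintro rfl x; cases x <;> simp [Finsupp.single_apply, fl] <;> grind
  · rintro rfl t i Γ
    have := TT0_half (M := lvl (t + (2 • Finsupp.single (vB false j 0) 1 + Finsupp.single (vC false j 0) 1 + Finsupp.single (vF false 0) 1)))
      (M' := lvl (t + (Finsupp.single (vC false j 0) 1 + Finsupp.single (vS false 0) 1))) n j (lv t 0) ?_ ?_ ?_ i Γ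
    · exact ⟨this.1, this.2⟩
    · intro m hm
      unfold lvl
      split_ifs with hh
      · have : (0 : Fin (n+1)) ≠ ⟨m, hh⟩ := by
          intro h; have := congrArg Fin.val h; simp at this; omega
        simp [lv, Finsupp.single_apply, this]
      · rfl
    · refine (lvl_fin _ (0 : Fin (n+1))).trans ?_; rw [lv_add]; congr 1
      ext <;> simp [lv, Finsupp.single_apply] <;> grind
    · refine (lvl_fin _ (0 : Fin (n+1))).trans ?_; rw [lv_add]; congr 1
      ext <;> simp [lv, Finsupp.single_apply] <;> grind

set_option linter.all false
open MvPolynomial MVar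

set_option maxHeartbeats 4000000 in
theorem cl_Pm {n m1 m2 : ℕ} (bar : Bool) (k : Fin n) (p : MPoly n) (hp : p ∈ Pm n bar k) :
    Cl n m1 m2 p := by
  have n1 : k.castSucc ≠ k.succ := (Fin.castSucc_lt_succ).ne
  have n2 : k.succ ≠ k.castSucc := n1.symm
  have n3 : k.succ ≠ 0 := Fin.succ_ne_zero k
  rcases hp with hp | ⟨j, rfl⟩
  · simp only [Set.mem_insert_iff, Set.mem_singleton_iff] at hp
    rcases hp with rfl | rfl | rfl | rfl | rfl | rfl
    · refine ⟨_, _, by simp only [X, monomial_mul, mul_one]; rfl, cl_P (bar := bar) k.castSucc k.succ ?_ ?_ ?_ ?_⟩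
      · simp [Finsupp.single_apply, n1, n2]
      · simp [Finsupp.single_apply, n1, n2]
      · rintro rfl x; cases x <;> simp [Finsupp.single_apply, fl] <;> grind
      · rintro rfl
        refine TT_rule_iff k loc1 (by simp) (by simp) (by simp) (by simp) ?_ ?_ ?_ ?_ ?_
        · ext l <;> (try fin_cases l) <;> simp [lv, Finsupp.single_apply, n1, n2]
        · ext l <;> (try fin_cases l) <;> simp [lv, Finsupp.single_apply, n1, n2]
        · ext l <;> (try fin_cases l) <;> simp [lv, Finsupp.single_apply, n1, n2]
        · ext l <;> (try fin_cases l) <;> simp [lv, Finsupp.single_apply, n1, n2]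
        · intro m h1 h2
          simp [lv, Finsupp.single_apply, h1.symm, h2.symm]
    · refine ⟨_, _, by simp only [X, monomial_mul, mul_one]; rfl, cl_P (bar := bar) k.castSucc k.castSucc ?_ ?_ ?_ ?_⟩
      · simp [Finsupp.single_apply, n1, n2]
      · simp [Finsupp.single_apply, n1, n2]
      · rintro rfl x; cases x <;> simp [Finsupp.single_apply, fl] <;> grind
      · rintro rfl
        refine TT_rule_iff k loc2 (by simp) (by simp) (by simp) (by simp) ?_ ?_ ?_ ?_ ?_
        · ext l <;> (try fin_cases l) <;> simp [lv, Finsupp.single_apply, n1, n2]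
        · ext l <;> (try fin_cases l) <;> simp [lv, Finsupp.single_apply, n1, n2]
        · ext l <;> (try fin_cases l) <;> simp [lv, Finsupp.single_apply, n1, n2]
        · ext l <;> (try fin_cases l) <;> simp [lv, Finsupp.single_apply, n1, n2]
        · intro m h1 h2
          simp [lv, Finsupp.single_apply, h1.symm, h2.symm]
    · refine ⟨_, _, by simp only [X, monomial_mul, mul_one]; rfl, cl_P (bar := bar) k.castSucc k.castSucc ?_ ?_ ?_ ?_⟩
      · simp [Finsupp.single_apply, n1, n2]
      · simp [Finsupp.single_apply, n1, n2]
      · rintro rfl x; cases x <;> simp [Finsupp.single_apply, fl] <;> grind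
      · rintro rfl
        refine TT_rule_iff k loc3 (by simp) (by simp) (by simp) (by simp) ?_ ?_ ?_ ?_ ?_
        · ext l <;> (try fin_cases l) <;> simp [lv, Finsupp.single_apply, n1, n2]
        · ext l <;> (try fin_cases l) <;> simp [lv, Finsupp.single_apply, n1, n2]
        · ext l <;> (try fin_cases l) <;> simp [lv, Finsupp.single_apply, n1, n2]
        · ext l <;> (try fin_cases l) <;> simp [lv, Finsupp.single_apply, n1, n2]
        · intro m h1 h2
          simp [lv, Finsupp.single_apply, h1.symm, h2.symm]
    · refine ⟨_, _, by simp only [X, monomial_mul, mul_one]; rfl, cl_P (bar := bar) k.castSucc k.castSucc ?_ ?_ ?_ ?_⟩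
      · simp [Finsupp.single_apply, n1, n2]
      · simp [Finsupp.single_apply, n1, n2]
      · rintro rfl x; cases x <;> simp [Finsupp.single_apply, fl] <;> grind
      · rintro rfl
        refine TT_rule_iff k loc4 (by simp) (by simp) (by simp) (by simp) ?_ ?_ ?_ ?_ ?_
        · ext l <;> (try fin_cases l) <;> simp [lv, Finsupp.single_apply, n1, n2]
        · ext l <;> (try fin_cases l) <;> simp [lv, Finsupp.single_apply, n1, n2]
        · ext l <;> (try fin_cases l) <;> simp [lv, Finsupp.single_apply, n1, n2]
        · ext l <;> (try fin_cases l) <;> simp [lv, Finsupp.single_apply, n1, n2]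
        · intro m h1 h2
          simp [lv, Finsupp.single_apply, h1.symm, h2.symm]
    · refine ⟨_, _, by simp only [X, monomial_mul, mul_one]; rfl, cl_P (bar := bar) k.castSucc k.castSucc ?_ ?_ ?_ ?_⟩
      · simp [Finsupp.single_apply, n1, n2]
      · simp [Finsupp.single_apply, n1, n2]
      · rintro rfl x; cases x <;> simp [Finsupp.single_apply, fl] <;> grind
      · rintro rfl
        refine TT_rule_iff k loc5 (by simp) (by simp) (by simp) (by simp) ?_ ?_ ?_ ?_ ?_
        · ext l <;> (try fin_cases l) <;> simp [lv, Finsupp.single_apply, n1, n2]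
        · ext l <;> (try fin_cases l) <;> simp [lv, Finsupp.single_apply, n1, n2]
        · ext l <;> (try fin_cases l) <;> simp [lv, Finsupp.single_apply, n1, n2]
        · ext l <;> (try fin_cases l) <;> simp [lv, Finsupp.single_apply, n1, n2]
        · intro m h1 h2
          simp [lv, Finsupp.single_apply, h1.symm, h2.symm]
    · refine ⟨_, _, by simp only [X, monomial_mul, mul_one]; rfl, cl_P (bar := bar) k.castSucc k.succ ?_ ?_ ?_ ?_⟩
      · simp [Finsupp.single_apply, n1, n2]
      · simp [Finsupp.single_apply, n1, n2]
      · rintro rfl x; cases x <;> simp [Finsupp.single_apply, fl] <;> grind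
      · rintro rfl
        refine TT_rule_iff k loc6 (by simp) (by simp) (by simp) (by simp) ?_ ?_ ?_ ?_ ?_
        · ext l <;> (try fin_cases l) <;> simp [lv, Finsupp.single_apply, n1, n2]
        · ext l <;> (try fin_cases l) <;> simp [lv, Finsupp.single_apply, n1, n2]
        · ext l <;> (try fin_cases l) <;> simp [lv, Finsupp.single_apply, n1, n2]
        · ext l <;> (try fin_cases l) <;> simp [lv, Finsupp.single_apply, n1, n2]
        · intro m h1 h2
          simp [lv, Finsupp.single_apply, h1.symm, h2.symm]
  · refine ⟨_, _, by simp only [X, monomial_mul, mul_one]; rfl, cl_P (bar := bar) k.castSucc k.castSucc ?_ ?_ ?_ ?_⟩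
    · simp [Finsupp.single_apply, n1, n2]
    · simp [Finsupp.single_apply, n1, n2]
    · rintro rfl x; cases x <;> simp [Finsupp.single_apply, fl] <;> grind
    · rintro rfl
      refine TT_rule_iff k (loc7 j) (by simp) (by simp) (by simp) (by simp) ?_ ?_ ?_ ?_ ?_
      · ext l <;> (try fin_cases l) <;> simp [lv, Finsupp.single_apply, n1, n2]
      · ext l <;>  simp [lv, Finsupp.single_apply, n1, n2] <;> revert l <;> decide +revert
      · ext l <;> (try fin_cases l) <;> simp [lv, Finsupp.single_apply, n1, n2]
      · ext l <;>  simp [lv, Finsupp.single_apply, n1, n2] <;> revert l <;> decide +revert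
      · intro m h1 h2
        simp [lv, Finsupp.single_apply, h1.symm, h2.symm]
set_option linter.all false
open MvPolynomial MVar

theorem wdeg_add {n : ℕ} (w : MVar n → ℝ) (t u : Mon (MVar n)) :
    wdeg w (t + u) = wdeg w t + wdeg w u := by
  unfold wdeg
  rw [Finsupp.sum_add_index']
  · simp
  · intros; push_cast; ring

theorem wdeg_single {n : ℕ} (w : MVar n → ℝ) (x : MVar n) (k : ℕ) :
    wdeg w (Finsupp.single x k) = k * w x := by
  unfold wdeg
  rw [Finsupp.sum_single_index]; simp

theorem wdeg_nonneg {n : ℕ} (w : MVar n → ℝ) (hpos : ∀ x, 0 < w x) (t : Mon (MVar n)) :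
    0 ≤ wdeg w t :=
  Finset.sum_nonneg fun x _ => mul_nonneg (Nat.cast_nonneg _) (hpos x).le

theorem wdeg_mono {n : ℕ} (w : MVar n → ℝ) (hpos : ∀ x, 0 < w x) {t u : Mon (MVar n)}
    (h : t ≤ u) : wdeg w t ≤ wdeg w u := by
  obtain ⟨d, rfl⟩ := exists_add_of_le h
  rw [wdeg_add]
  linarith [wdeg_nonneg w hpos d]

theorem wdeg_inj {n : ℕ} (w : MVar n → ℝ) (hind : LinearIndependent ℚ w) :
    Function.Injective (wdeg w) := by
  have h : LinearIndependent ℕ w := hind.restrict_scalars' (R := ℕ)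
  intro t u htu
  apply h
  simpa [Finsupp.linearCombination_apply, wdeg] using htu

/-- the functional argument -/
theorem exists_mem {n : ℕ} (F : Set (MPoly n)) (S : Mon (MVar n) → Prop)
    (hF : ∀ p ∈ F, ∃ u v : Mon (MVar n), p = monomial u 1 + monomial v 1 ∧ ∀ t, S (t+u) ↔ S (t+v))
    (g : Mon (MVar n)) (hg : S g) (f : MPoly n) (h : (monomial g 1 : MPoly n) + f ∈ Ideal.span F) :
    ∃ t ∈ f.support, S t := by
  classical
  let φ : MPoly n →ₗ[ZMod 2] ZMod 2 :=
    (basisMonomials (MVar n) (ZMod 2)).constr (ZMod 2) (fun t => if S t then 1 else 0)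
  have hφ : ∀ t, φ (monomial t 1) = if S t then 1 else 0 := by
    intro t
    have := (basisMonomials (MVar n) (ZMod 2)).constr_basis (ZMod 2)
      (fun t => if S t then (1 : ZMod 2) else 0) t
    simpa [φ] using this
  have hφ' : ∀ t c, φ (monomial t c) = if S t then c else 0 := by
    intro t c
    have : (monomial t c : MPoly n) = c • monomial t 1 := by simp [smul_monomial]
    rw [this, map_smul, hφ]; simp
  have h2 : ∀ a : ZMod 2, a + a = 0 := by decide
  have key : ∀ p ∈ Ideal.span F, ∀ q : MPoly n, φ (q * p) = 0 := by
    intro p hp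
    induction hp using Submodule.span_induction with
    | zero => simp
    | add x y _ _ hx hy => intro q; simp [mul_add, hx, hy]
    | mem x hx =>
      obtain ⟨u, v, rfl, huv⟩ := hF x hx
      intro q
      induction q using MvPolynomial.induction_on' with
      | monomial t c =>
        rw [mul_add, monomial_mul, monomial_mul, map_add, hφ', hφ']
        by_cases hh : S (t+v) <;> simp [huv, hh, h2]
      | add p q hp hq => rw [add_mul, map_add, hp, hq, add_zero]
    | smul a x _ hx => intro q; rw [smul_eq_mul, ← mul_assoc]; exact hx _
  have h0 := key _ h 1
  rw [one_mul, map_add, hφ, if_pos hg] at h0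
  by_contra! hno
  have : φ f = 0 := by
    rw [f.as_sum, map_sum]
    exact Finset.sum_eq_zero fun t ht => by rw [hφ', if_neg (hno t ht)]
  rw [this] at h0
  simp at h0

theorem inA_iff {n m1 m2 : ℕ} (M : Mon (MVar n)) : inA n m1 m2 M ↔
    M vl = 1 ∧ (∀ x, fl x = true → x ≠ vB false 3 (Fin.last n) → M x = 0) ∧
      M (vB false 3 (Fin.last n)) + M vc + M vcb = m1 + m2 := by
  have e : lvl M n = lv M (Fin.last n) := lvl_fin M (Fin.last n)
  unfold inA
  rw [e]
  constructor
  · rintro ⟨h1, h2, ⟨a1, a2, a3, a4, a5⟩, h3⟩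
    refine ⟨h1, ?_, h3⟩
    have h2' : ∀ k : Fin (n+1), k ≠ Fin.last n → (lv M k).Zero := fun k hk => by
      rw [← lvl_fin]; exact h2 _ (Fin.val_lt_last hk)
    intro x hx hne
    cases x with
    | vs | vl | vc | vcb | vb | vbb => simp [fl] at hx
    | vS b k | vF b k | vQ b j k | vC b j k | vB b j k =>
      obtain rfl : b = false := by simpa [fl] using hx
      by_cases hk : k = Fin.last n
      · subst hk
        first | exact a1 | exact a2 | exact a3 j | exact a4 j | exact a5 j (by rintro rfl; exact hne rfl)
      · obtain ⟨b1, b2, b3, b4, b5⟩ := h2' k hk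
        first | exact b1 | exact b2 | exact b3 j | exact b4 j | exact b5 j
  · rintro ⟨h1, h2, h3⟩
    refine ⟨h1, ?_, ⟨h2 _ rfl (by simp), h2 _ rfl (by simp), fun j => h2 _ rfl (by simp),
      fun j => h2 _ rfl (by simp), fun j hj => h2 _ rfl (by simp [hj])⟩, h3⟩
    intro m hm
    have hne : (⟨m, by omega⟩ : Fin (n+1)) ≠ Fin.last n := by
      intro h; have := congrArg Fin.val h; simp at this; omega
    rw [lvl, dif_pos (by omega)]
    exact ⟨h2 _ rfl (by simp), h2 _ rfl (by simp), fun j => h2 _ rfl (by simp),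
      fun j => h2 _ rfl (by simp), fun j => h2 _ rfl (by simp [hne])⟩

theorem inB_tok {n m1 m2 : ℕ} (M : Mon (MVar n))
    (h : 1 ≤ M (vS false (Fin.last n)) + M (vF false (Fin.last n))) : inB n m1 m2 M ↔
    M vl = 0 ∧ M (vS false (Fin.last n)) + M (vF false (Fin.last n)) = 1 ∧
      M (vC false 3 (Fin.last n)) = 1 ∧
      (∀ x, fl x = true → x ≠ vB false 3 (Fin.last n) → x ≠ vS false (Fin.last n) →
        x ≠ vF false (Fin.last n) → x ≠ vC false 3 (Fin.last n) → M x = 0) ∧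
      M (vB false 3 (Fin.last n)) + en n * M (vS false (Fin.last n)) + M vc + M vcb = m1 + m2 := by
  have e : lvl M n = lv M (Fin.last n) := lvl_fin M (Fin.last n)
  have hQ : ∀ v, QQ (lvl M) n v ↔ Tk (lvl M) n v := fun v => QQ_tok _ _ _ (by rw [e]; exact h)
  unfold inB TT
  simp only [hQ, Tk]
  rw [e]
  constructor
  · rintro ⟨h1, Γ, ⟨v, ⟨c1, rfl, c3, h2⟩, c5, c6⟩, c7, c8⟩
    have h2' : ∀ k : Fin (n+1), k ≠ Fin.last n → (lv M k).Zero := fun k hk => by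
      rw [← lvl_fin]; exact h2 _ (Fin.val_lt_last hk)
    refine ⟨h1, c1, (c5 3).trans (if_pos rfl), ?_, ?_⟩
    · intro x hx n1 n2 n3 n4
      cases x with
      | vs | vl | vc | vcb | vb | vbb => simp [fl] at hx
      | vS b k | vF b k | vQ b j k | vC b j k | vB b j k =>
        obtain rfl : b = false := by simpa [fl] using hx
        by_cases hk : k = Fin.last n
        · subst hk
          first
          | exact absurd rfl n2
          | exact absurd rfl n3
          | exact c3 j
          | (have hj : j ≠ 3 := by rintro rfl; exact n4 rfl
             have := c5 j
             rw [if_neg hj] at this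
             exact this)
          | (have hj : j ≠ 3 := by rintro rfl; exact n1 rfl
             have h6 := c6 j
             rw [if_neg hj, c7 j hj] at h6
             exact h6.symm)
        · obtain ⟨b1, b2, b3, b4, b5⟩ := h2' k hk
          first | exact b1 | exact b2 | exact b3 j | exact b4 j | exact b5 j
    · have h6 := c6 3
      rw [if_pos rfl] at h6
      rw [← c8, h6]; rfl
  · rintro ⟨h1, h2, h3, h4, h5⟩
    refine ⟨h1, fun j => if j = 3 then M (vB false 3 (Fin.last n)) + en n * M (vS false (Fin.last n)) else 0,
      ⟨_, ⟨h2, rfl, fun j => h4 _ rfl (by simp) (by simp) (by simp) (by simp), ?_⟩, ?_, ?_⟩, ?_, ?_⟩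
    · intro m hm
      have hne : (⟨m, by omega⟩ : Fin (n+1)) ≠ Fin.last n := by
        intro h; have := congrArg Fin.val h; simp at this; omega
      rw [lvl, dif_pos (by omega)]
      exact ⟨h4 _ rfl (by simp) (by simp [hne]) (by simp) (by simp),
        h4 _ rfl (by simp) (by simp) (by simp [hne]) (by simp),
        fun j => h4 _ rfl (by simp) (by simp) (by simp) (by simp),
        fun j => h4 _ rfl (by simp) (by simp) (by simp) (by simp [hne]),
        fun j => h4 _ rfl (by simp [hne]) (by simp) (by simp) (by simp)⟩
    · intro j
      split_ifs with hj
      · subst hj; exact h3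
      · exact h4 _ rfl (by simp) (by simp) (by simp) (by simp [hj])
    · intro j
      dsimp only
      split_ifs with hj
      · subst hj; rfl
      · exact (h4 _ rfl (by simp [hj]) (by simp) (by simp) (by simp)).symm
    · intro j hj; simp [hj]
    · simpa using h5

theorem not_inS_s {n m1 m2 : ℕ} (hm : m1 + m2 < en n) {u : Mon (MVar n)} (t : Mon (MVar n))
    (hu : 1 ≤ u (vS false (Fin.last n))) : ¬ inS n m1 m2 (t + u) := by
  rintro ⟨-, -, -, -, h | h⟩
  · exact not_inA_tok t (Fin.last n) (by omega) h
  · have h0 : 1 ≤ (t + u) (vS false (Fin.last n)) := by simp; omega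
    rw [inB_tok _ (by omega)] at h
    have := h.2.2.2.2
    have : en n * 1 ≤ en n * (t + u) (vS false (Fin.last n)) := Nat.mul_le_mul_left _ h0
    omega

theorem not_inS_vs {n m1 m2 : ℕ} {u : Mon (MVar n)} (t : Mon (MVar n))
    (hu : 1 ≤ u vs) : ¬ inS n m1 m2 (t + u) := by
  rintro ⟨-, h, -⟩
  simp at h; omega

theorem cl_G12 {n m1 m2 : ℕ} {u v : Mon (MVar n)} (hu : u vl = 1) (hv : v vl = 1)
    (hx : ∀ x, fl x = true ∨ bars x = true → x ≠ vB false 3 (Fin.last n) → u x = 0 ∧ v x = 0)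
    (hs : u vs = v vs)
    (h1 : u vc + u vb = v vc + v vb) (h2 : u vcb + u vbb = v vcb + v vbb)
    (h3 : u (vB false 3 (Fin.last n)) + u vc + u vcb = v (vB false 3 (Fin.last n)) + v vc + v vcb)
    (t : Mon (MVar n)) : inS n m1 m2 (t + u) ↔ inS n m1 m2 (t + v) := by
  have b1 : ¬ inB n m1 m2 (t + u) := by rintro ⟨h, -⟩; simp [hu] at h
  have b2 : ¬ inB n m1 m2 (t + v) := by rintro ⟨h, -⟩; simp [hv] at h
  unfold inS
  simp only [b1, b2, or_false, inA_iff]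
  have e1 : (∀ x, bars x = true → (t+u) x = 0) ↔ (∀ x, bars x = true → (t+v) x = 0) :=
    forall₂_congr fun x h => by
      have := hx x (Or.inr h) (by rintro rfl; simp [bars] at h)
      simp [this.1, this.2]
  have e2 : (∀ x, fl x = true → x ≠ vB false 3 (Fin.last n) → (t+u) x = 0) ↔
      (∀ x, fl x = true → x ≠ vB false 3 (Fin.last n) → (t+v) x = 0) :=
    forall₃_congr fun x h h' => by
      have := hx x (Or.inl h) h'
      simp [this.1, this.2]
  rw [e1, e2]
  simp only [Finsupp.add_apply, hu, hv, hs]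
  refine and_congr_right fun _ => and_congr_right fun _ => ?_
  constructor <;> rintro ⟨c1, c2, c3, c4, c5⟩ <;> refine ⟨?_, ?_, c3, c4, ?_⟩ <;> omega
set_option linter.all false
open MvPolynomial MVar

theorem cl_G3 {n m1 m2 : ℕ} (t : Mon (MVar n)) :
    inS n m1 m2 (t + (Finsupp.single (vC false 3 (Fin.last n)) 1
      + Finsupp.single (vF false (Fin.last n)) 1)) ↔
    inS n m1 m2 (t + Finsupp.single vl 1) := by
  set u : Mon (MVar n) := Finsupp.single (vC false 3 (Fin.last n)) 1
      + Finsupp.single (vF false (Fin.last n)) 1 with hu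
  set v : Mon (MVar n) := Finsupp.single vl 1 with hv
  have uF : u (vF false (Fin.last n)) = 1 := by simp [hu, Finsupp.single_apply]
  have uC : u (vC false 3 (Fin.last n)) = 1 := by simp [hu, Finsupp.single_apply]
  have u0 : ∀ x, x ≠ vF false (Fin.last n) → x ≠ vC false 3 (Fin.last n) → u x = 0 := by
    intro x h1 h2
    simp [hu, Finsupp.single_apply, h1.symm, h2.symm]
  have vL : v vl = 1 := by simp [hv]
  have v0 : ∀ x, x ≠ vl → v x = 0 := by
    intro x h1
    simp [hv, Finsupp.single_apply, h1.symm]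
  have a1 : ¬ inA n m1 m2 (t + u) := not_inA_tok t (Fin.last n) (by omega)
  have b2 : ¬ inB n m1 m2 (t + v) := by rintro ⟨h, -⟩; simp [vL] at h
  unfold inS
  simp only [a1, b2, or_false, false_or]
  rw [inA_iff, inB_tok _ (by have := Finsupp.add_apply t u (vF false (Fin.last n)); omega)]
  simp only [Finsupp.add_apply, uF, uC, vL, u0 vs (by simp) (by simp), v0 vs (by simp),
    u0 vc (by simp) (by simp), v0 vc (by simp), u0 vcb (by simp) (by simp), v0 vcb (by simp),
    u0 vb (by simp) (by simp), v0 vb (by simp), u0 vbb (by simp) (by simp), v0 vbb (by simp),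
    u0 vl (by simp) (by simp), u0 (vS false (Fin.last n)) (by simp) (by simp),
    u0 (vB false 3 (Fin.last n)) (by simp) (by simp), v0 (vB false 3 (Fin.last n)) (by simp)]
  refine and_congr ?_ (and_congr_right fun _ => and_congr_right fun _ => and_congr_right fun _ => ?_)
  · refine forall₂_congr fun x h => ?_
    rw [u0 x (by rintro rfl; simp [bars] at h) (by rintro rfl; simp [bars] at h),
      v0 x (by rintro rfl; simp [bars] at h)]
  constructor
  · rintro ⟨c1, c2, c3, c4, c5⟩
    have s0 : t (vS false (Fin.last n)) = 0 := by omega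
    have f0 : t (vF false (Fin.last n)) = 0 := by omega
    have d0 : t (vC false 3 (Fin.last n)) = 0 := by omega
    rw [s0] at c5
    refine ⟨by omega, ?_, by simpa using c5⟩
    intro x hx hB
    rw [v0 x (by rintro rfl; simp [fl] at hx), add_zero]
    by_cases h1 : x = vS false (Fin.last n)
    · rw [h1, s0]
    by_cases h2 : x = vF false (Fin.last n)
    · rw [h2, f0]
    by_cases h3 : x = vC false 3 (Fin.last n)
    · rw [h3, d0]
    have := c4 x hx hB h1 h2 h3
    omega
  · rintro ⟨c1, c2, c3⟩
    have c2' : ∀ x, fl x = true → x ≠ vB false 3 (Fin.last n) → t x = 0 := by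
      intro x h h'; have := c2 x h h'; omega
    have s0 := c2' (vS false (Fin.last n)) rfl (by simp)
    have f0 := c2' (vF false (Fin.last n)) rfl (by simp)
    have d0 := c2' (vC false 3 (Fin.last n)) rfl (by simp)
    refine ⟨by omega, by omega, by omega, ?_, by simpa [s0] using c3⟩
    intro x h1 h2 h3 h4 h5
    rw [u0 x h4 h5, c2' x h1 h2]

theorem cl_GG {n m1 m2 : ℕ} (hm : m1 + m2 < en n) (p : MPoly n) (hp : p ∈ GG n) :
    Cl n m1 m2 p := by
  simp only [GG, Set.mem_insert_iff, Set.mem_singleton_iff] at hp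
  rcases hp with rfl | rfl | rfl | rfl | rfl | rfl | rfl
  · refine ⟨_, _, by simp only [X, monomial_mul, mul_one]; rfl, cl_G12 ?_ ?_ ?_ ?_ ?_ ?_ ?_⟩
    rotate_left 2
    · intro x; cases x <;> simp [Finsupp.single_apply, fl, bars] <;> grind
    all_goals simp [Finsupp.single_apply]
  · refine ⟨_, _, by simp only [X, monomial_mul, mul_one]; rfl, cl_G12 ?_ ?_ ?_ ?_ ?_ ?_ ?_⟩
    rotate_left 2
    · intro x; cases x <;> simp [Finsupp.single_apply, fl, bars] <;> grind
    all_goals simp [Finsupp.single_apply]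
  · exact ⟨_, _, by simp only [X, monomial_mul, mul_one], cl_G3⟩
  · refine ⟨_, _, by simp only [X, monomial_mul, mul_one]; rfl, fun t => iff_of_false
      (not_inS_bar t (vC true 3 (Fin.last n)) rfl ?_) (not_inS_s hm t ?_)⟩ <;>
    simp [Finsupp.single_apply]
  · refine ⟨_, _, by simp only [X, monomial_mul, mul_one]; rfl, fun t => iff_of_false
      (not_inS_s hm t ?_) (not_inS_s hm t ?_)⟩ <;>
    simp [Finsupp.single_apply]
  · refine ⟨_, _, by simp only [X, monomial_mul, mul_one]; rfl, fun t => iff_of_false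
      (not_inS_s hm t ?_) (not_inS_s hm t ?_)⟩ <;>
    simp [Finsupp.single_apply]
  · refine ⟨_, _, by simp only [X, monomial_mul, mul_one]; rfl, fun t => iff_of_false
      (not_inS_bar t (vC true 3 (Fin.last n)) rfl ?_) (not_inS_vs t ?_)⟩ <;>
    simp [Finsupp.single_apply]

theorem cl_FF {n m1 m2 : ℕ} (hm : m1 + m2 < en n) (p : MPoly n) (hp : p ∈ FF n) :
    Cl n m1 m2 p := by
  have hP : ∀ bar, p ∈ PP n bar → Cl n m1 m2 p := by
    rintro bar (h | h)
    · exact cl_P0 bar p h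
    · obtain ⟨k, hk⟩ := Set.mem_iUnion.1 h
      exact cl_Pm bar k p hk
  rcases hp with (hp | hp) | hp
  · exact hP _ hp
  · exact hP _ hp
  · exact cl_GG hm p hp

/-- no monomial of an element of the ideal is a product of `c` and `c̄` only -/
theorem FF_le {n : ℕ} : Ideal.span (FF n) ≤
    Ideal.span (Set.image (X : MVar n → MPoly n) {x | x ≠ vc ∧ x ≠ vcb}) := by
  set I := Ideal.span (Set.image (X : MVar n → MPoly n) {x | x ≠ vc ∧ x ≠ vcb}) with hI
  have hx : ∀ x : MVar n, x ≠ vc → x ≠ vcb → Ideal.Quotient.mk I (X x) = 0 := fun x h1 h2 =>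
    Ideal.Quotient.eq_zero_iff_mem.2 (Ideal.subset_span ⟨x, ⟨h1, h2⟩, rfl⟩)
  rw [Ideal.span_le]
  intro p hp
  rw [SetLike.mem_coe, ← Ideal.Quotient.eq_zero_iff_mem]
  have hP : ∀ bar, p ∈ PP n bar → Ideal.Quotient.mk I p = 0 := by
    rintro bar (⟨j, rfl⟩ | h)
    · simp [hx]
    · obtain ⟨k, hp | ⟨j, rfl⟩⟩ := Set.mem_iUnion.1 h
      · simp only [Set.mem_insert_iff, Set.mem_singleton_iff] at hp
        rcases hp with rfl | rfl | rfl | rfl | rfl | rfl <;> simp [hx]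
      · simp [hx]
  rcases hp with (hp | hp) | hp
  · exact hP _ hp
  · exact hP _ hp
  · simp only [GG, Set.mem_insert_iff, Set.mem_singleton_iff] at hp
    rcases hp with rfl | rfl | rfl | rfl | rfl | rfl | rfl <;> simp [hx]
set_option linter.all false
open MvPolynomial MVar

theorem inS_g {n m1 m2 : ℕ} :
    inS n m1 m2 (Finsupp.single vl 1 + Finsupp.single vcb m1 + Finsupp.single vc m2) := by
  refine ⟨?_, by simp, by simp, by simp, Or.inl ?_⟩
  · intro x; cases x <;> simp [bars, Finsupp.single_apply]
  · rw [inA_iff]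
    refine ⟨by simp, ?_, by simp [add_comm]⟩
    intro x; cases x <;> simp [fl, Finsupp.single_apply]

theorem weight_S {n m1 m2 : ℕ} (w : MVar n → ℝ) (hpos : ∀ x, 0 < w x)
    (h2 : w vc < w vcb) (h3 : w vcb < w vl) (h4 : w vl < w vb) (h5 : w vb < w vbb)
    (hC : w vl < w (vC false 3 (Fin.last n))) (M : Mon (MVar n)) (hM : inS n m1 m2 M) :
    M = Finsupp.single vl 1 + Finsupp.single vcb m1 + Finsupp.single vc m2 ∨
    wdeg w (Finsupp.single vl 1 + Finsupp.single vcb m1 + Finsupp.single vc m2) < wdeg w M := by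
  obtain ⟨hb, hs, hc1, hc2, hAB⟩ := hM
  have hle : Finsupp.single vl (M vl) + Finsupp.single (vC false 3 (Fin.last n)) (M (vC false 3 (Fin.last n)))
      + Finsupp.single vc (M vc) + Finsupp.single vb (M vb) + Finsupp.single vcb (M vcb)
      + Finsupp.single vbb (M vbb) ≤ M := by
    intro x
    cases x <;> simp [Finsupp.single_apply]
    split_ifs with h
    · obtain ⟨rfl, rfl, rfl⟩ := h; rfl
    · omega
  have hw := wdeg_mono w hpos hle
  simp only [wdeg_add, wdeg_single] at hw ⊢
  have e1 : (m2 : ℝ) = M vc + M vb := by rw [← hc1]; push_cast; ring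
  have e2 : (m1 : ℝ) = M vcb + M vbb := by rw [← hc2]; push_cast; ring
  rw [e1, e2]
  have p1 : 0 ≤ (M vb : ℝ) * (w vb - w vc) := mul_nonneg (Nat.cast_nonneg _) (by linarith)
  have p2 : 0 ≤ (M vbb : ℝ) * (w vbb - w vcb) := mul_nonneg (Nat.cast_nonneg _) (by linarith)
  rcases hAB with hA | hB
  · rw [inA_iff] at hA
    obtain ⟨a1, a2, a3⟩ := hA
    have p3 : 0 ≤ (M (vC false 3 (Fin.last n)) : ℝ) * w (vC false 3 (Fin.last n)) :=
      mul_nonneg (Nat.cast_nonneg _) (hpos _).le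
    rw [a1] at hw
    by_cases hz : M vb = 0 ∧ M vbb = 0
    · left
      ext x
      have hB0 : M (vB false 3 (Fin.last n)) = 0 := by omega
      have hfl : ∀ x, fl x = true → M x = 0 := by
        intro x hx
        by_cases h : x = vB false 3 (Fin.last n)
        · rw [h, hB0]
        · exact a2 x hx h
      cases x with
      | vs | vl | vc | vcb | vb | vbb => simp [Finsupp.single_apply]; omega
      | vS b k | vF b k | vQ b j k | vC b j k | vB b j k =>
        simp [Finsupp.single_apply]
        cases b
        · exact hfl _ rfl
        · exact hb _ rfl
    · right
      have : 0 < (M vb : ℝ) * (w vb - w vc) ∨ 0 < (M vbb : ℝ) * (w vbb - w vcb) := by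
        by_cases h : M vb = 0
        · right
          exact mul_pos (Nat.cast_pos.2 (by omega)) (by linarith)
        · left
          exact mul_pos (Nat.cast_pos.2 (by omega)) (by linarith)
      push_cast at hw ⊢
      rcases this with h | h <;> nlinarith
  · right
    obtain ⟨b1, Γ, ⟨v, -, c, -⟩, -⟩ := hB
    have e : lvl M n = lv M (Fin.last n) := lvl_fin M (Fin.last n)
    rw [e] at c
    have hc : M (vC false 3 (Fin.last n)) = 1 := (c 3).trans (if_pos rfl)
    rw [b1, hc] at hw
    push_cast at hw ⊢
    nlinarith

theorem polyLe_of {n : ℕ} (w : MVar n → ℝ) (hind : LinearIndependent ℚ w)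
    (g : Mon (MVar n)) (f : MPoly n) (t : Mon (MVar n)) (ht : t ∈ f.support)
    (hgt : t = g ∨ wdeg w g < wdeg w t) : polyLe (wLe w) (monomial g 1) f := by
  classical
  have h01 : ∀ a : ZMod 2, a ≠ 0 → a = 1 := by decide
  have hs : (monomial g (1 : ZMod 2)).support = {g} := by
    rw [support_monomial, if_neg one_ne_zero]
  have hle : ∀ a b, wdeg w a ≤ wdeg w b → wLe w a b := by
    intro a b h
    rcases h.lt_or_eq with h | h
    · exact Or.inr h
    · exact Or.inl (wdeg_inj w hind h)
  unfold polyLe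
  rw [hs]
  by_cases hfg : f.support = {g}
  · left
    ext x
    rw [coeff_monomial]
    split_ifs with h
    · subst h
      refine (h01 _ (mem_support_iff.1 ?_)).symm
      rw [hfg]; simp
    · symm
      rw [← notMem_support_iff, hfg]
      simpa using fun h' => h h'.symm
  right
  have hne : (f.support \ {g}).Nonempty := by
    rw [Finset.nonempty_iff_ne_empty]
    intro h0
    rw [Finset.sdiff_eq_empty_iff_subset, Finset.subset_singleton_iff] at h0
    rcases h0 with h0 | h0
    · rw [h0] at ht; simp at ht
    · exact hfg h0
  obtain ⟨m, hm, hmax⟩ := Finset.exists_max_image _ (wdeg w) hne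
  rw [Finset.mem_sdiff] at hm
  refine ⟨m, hm.1, hm.2, ?_⟩
  rintro u (⟨h1, h2⟩ | ⟨h1, h2⟩)
  · exact hle _ _ (hmax u (Finset.mem_sdiff.2 ⟨h1, h2⟩))
  · rw [Finset.mem_singleton] at h1
    subst h1
    rcases hgt with rfl | hlt
    · exact absurd ht h2
    · refine hle _ _ (hlt.le.trans (hmax t (Finset.mem_sdiff.2 ⟨ht, ?_⟩)))
      rw [Finset.mem_singleton]
      rintro rfl
      exact lt_irrefl _ hlt

open MVar in
/-- Let `w` be an injective weight map with positive, `ℚ`-linearly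
independent values, `w(s) < w(c) < w(c̄) < w(ℓ) < w(b) < w(b̄)`, and `w(y) < w(x)` for every
`y ∈ {s,c,c̄,ℓ,b,b̄}` and variable `x` outside this set. Then for every `g ∈ D` and every
polynomial `f` with `g + f ∈ ⟨𝓕⟩`, one has `g ≼_w f` (the weighted order extended to
polynomials). -/
theorem stmt18 (n : ℕ) (w : MVar n → ℝ)
    (hinj : Function.Injective w)
    (hpos : ∀ x, 0 < w x)
    (hind : LinearIndependent ℚ w)
    (h1 : w vs < w vc) (h2 : w vc < w vcb) (h3 : w vcb < w vl)
    (h4 : w vl < w vb) (h5 : w vb < w vbb)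
    (hsmall : ∀ x : MVar n, x ∉ ({vs, vc, vcb, vl, vb, vbb} : Set (MVar n)) →
      ∀ y ∈ ({vs, vc, vcb, vl, vb, vbb} : Set (MVar n)), w y < w x)
    (g : Mon (MVar n)) (hg : g ∈ Dmon n) (f : MPoly n)
    (h : (monomial g 1 : MPoly n) + f ∈ Ideal.span (FF n)) :
    polyLe (wLe w) (monomial g 1) f := by
  obtain ⟨j, m1, m2, hj, hjm, rfl⟩ := hg
  interval_cases j
  · refine polyLe_of w hind _ f _ ?_ (Or.inl rfl)
    have h' := FF_le h
    rw [mem_ideal_span_X_image] at h'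
    by_contra hf
    obtain ⟨x, ⟨hx1, hx2⟩, hx⟩ := h' _ (by
      rw [mem_support_iff, coeff_add, coeff_monomial, if_pos rfl, notMem_support_iff.1 hf]
      decide)
    apply hx
    simp [Finsupp.single_apply, hx1.symm, hx2.symm]
  · obtain ⟨t, ht, hS⟩ := exists_mem (FF n) (inS n m1 m2) (cl_FF (by omega)) _ inS_g f h
    exact polyLe_of w hind _ f t ht
      (weight_S w hpos h2 h3 h4 h5 (hsmall _ (by simp) _ (by simp)) t hS)
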